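/- (Multivariate Khovanskii-Nathanson theorem) Let S be a commutative monoid and A_1,...,A_r finite nonempty subsets of S. Then there exists a polynomial p(t_1,...,t_r) with rational coefficients such that |h_1 A_1 + ... + h_r A_r| = p(h_1,...,h_r) for all sufficiently large positive integers h_1,...,h_r. -/

import Mathlib

open Pointwise

/-!
Write an element of `∑ j, h j • A j` as `∑ x i • a i`, where `x` is a vector of multiplicities
indexed by the pairs `i = (j, a)` with `a ∈ A j`; its multidegree, whose `j`-th component is the sum
of the coordinates over `A j`, equals `h`. The vectors that are lexicographically least among those
with the same multidegree and the same value form a lower set `L`, because the lexicographic order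
is compatible with addition. By Dickson's lemma the complement of `L` is generated by finitely many
vectors, so inclusion–exclusion expresses the number of points of `L` of multidegree `h` through
the numbers of `x ≥ u` of multidegree `h`, and each of these is a product of binomial coefficients
`(h j - deg u j + d j).choose (d j)` with `d j + 1 = #(A j)`.
-/

section LowerSets

theorem exists_finset_mem_iff_forall_not_le_of_isLowerSet {P : Type*} [PartialOrder P]
    [WellQuasiOrderedLE P] {L : Set P} (hL : IsLowerSet L) :
    ∃ M : Finset P, ∀ x, x ∈ L ↔ ∀ u ∈ M, ¬u ≤ x := by
  have hfin : {u | Minimal (· ∉ L) u}.Finite :=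
    WellQuasiOrderedLE.finite_of_isAntichain (setOfPred_minimal_antichain _)
  refine ⟨hfin.toFinset, fun x => ⟨fun hx u hu hux => ?_, fun hx => ?_⟩⟩
  · have hmin : Minimal (· ∉ L) u := hfin.mem_toFinset.1 hu
    exact hmin.prop (hL hux hx)
  · by_contra hxL
    obtain ⟨u, hux, hu⟩ := exists_minimal_le_of_wellFoundedLT (· ∉ L) x hxL
    exact hx u (hfin.mem_toFinset.2 hu) hux

theorem exists_isLowerSet_bijOn_range {κ T : Type*} [Finite κ] [AddZeroClass T]
    (f : (κ → ℕ) →+ T) : ∃ L : Set (κ → ℕ), IsLowerSet L ∧ Set.BijOn f L (Set.range f) := by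
  let : LinearOrder κ := LinearOrder.lift' (Finite.equivFin κ) (Finite.equivFin κ).injective
  refine ⟨{x | ∀ y, f y = f x → toLex x ≤ toLex y}, fun x z hzx hx y hy => ?_,
    fun x _ => Set.mem_range_self x, fun x hx y hy hxy => ?_, ?_⟩
  · obtain ⟨d, rfl⟩ := exists_add_of_le hzx
    have hle : toLex (z + d) ≤ toLex (y + d) := hx (y + d) (by rw [map_add, map_add, hy])
    rw [toLex_add, toLex_add] at hle
    exact le_of_add_le_add_right hle
  · exact toLex.injective (le_antisymm (hx y hxy.symm) (hy x hxy))
  · rintro _ ⟨y, rfl⟩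
    obtain ⟨x, hx⟩ := exists_minimal_of_wellFoundedLT
      (fun x : Lex (κ → ℕ) => f (ofLex x) = f y) ⟨toLex y, rfl⟩
    exact ⟨ofLex x, fun z hz => hx.le (y := toLex z) (hz.trans hx.prop), hx.prop⟩

end LowerSets

theorem card_filter_forall_not_eq_sum_powerset {α β : Type*} (F : Finset α) (M : Finset β)
    (p : β → α → Prop) [∀ b, DecidablePred (p b)] :
    ((F.filter fun x => ∀ b ∈ M, ¬p b x).card : ℤ) =
      ∑ t ∈ M.powerset, (-1) ^ t.card * ((F.filter fun x => ∀ b ∈ t, p b x).card : ℤ) := by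
  classical
  have hcard (t : Finset β) (q : β → α → Prop) [∀ b, DecidablePred (q b)] :
      (F.filter fun x => ∀ b ∈ t, q b x).card =
        (t.inf fun b => Finset.univ.filter fun x : F => q b x).card := by
    have hinf : (t.inf fun b => Finset.univ.filter fun x : F => q b x) =
        Finset.univ.filter fun x : F => ∀ b ∈ t, q b x := by
      ext
      simp only [Finset.mem_inf, Finset.mem_filter_univ]
    rw [hinf, Finset.card_filter, Finset.card_filter, Finset.univ_eq_attach,
      Finset.sum_attach F fun x => if ∀ b ∈ t, q b x then 1 else 0]
  rw [hcard M fun b x => ¬p b x]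
  simp only [hcard _ p, Finset.filter_not, ← Finset.compl_eq_univ_sdiff]
  exact Finset.inclusion_exclusion_card_inf_compl M fun b => Finset.univ.filter fun x : F => p b x

theorem card_piAntidiag_univ {α : Type*} [Fintype α] [DecidableEq α] (n : ℕ) :
    (Finset.piAntidiag (Finset.univ : Finset α) n).card = (Fintype.card α).multichoose n := by
  rw [← Finset.map_sym_eq_piAntidiag, Finset.card_map, Finset.sym_univ, Finset.card_univ,
    Sym.card_sym_eq_multichoose]

theorem eval_preHilbertPoly_eq_multichoose {d k n : ℕ} (hd : 0 < d) (hkn : k ≤ n) :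
    (Polynomial.preHilbertPoly ℚ (d - 1) k).eval (n : ℚ) = d.multichoose (n - k) := by
  have hshift : d + (n - k) - 1 = n - k + (d - 1) := by omega
  rw [Polynomial.preHilbertPoly_eq_choose_sub_add ℚ _ hkn, Nat.multichoose_eq, hshift,
    Nat.choose_symm_add]

section Multidegree

variable {ι : Type*} {α : ι → Type*} [∀ j, Fintype (α j)]

/-- The `ι`-grading on exponent vectors whose variables are grouped into classes `α j`: the
`j`-th component is the total degree in the variables of class `j`. -/
def multidegree : ((Σ j, α j) → ℕ) →+ (ι → ℕ) where
  toFun x j := ∑ a, x ⟨j, a⟩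
  map_zero' := by ext; simp
  map_add' x y := by ext; simp [Finset.sum_add_distrib]

theorem multidegree_apply (x : (Σ j, α j) → ℕ) (j : ι) : multidegree x j = ∑ a, x ⟨j, a⟩ := rfl

theorem multidegree_mono : Monotone (multidegree : ((Σ j, α j) → ℕ) →+ (ι → ℕ)) :=
  fun _ _ hxy _ => Finset.sum_le_sum fun _ _ => hxy _

variable [Fintype ι] [DecidableEq ι] [∀ j, DecidableEq (α j)]

/-- The finite set of exponent vectors of multidegree `h`, assembled from the vectors of total
degree `h j` in each class of variables. -/
def multidegreeFiber (h : ι → ℕ) : Finset ((Σ j, α j) → ℕ) :=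
  (Fintype.piFinset fun j => Finset.piAntidiag Finset.univ (h j)).map
    (Equiv.piCurry fun _ _ => ℕ).symm.toEmbedding

theorem mem_multidegreeFiber {h : ι → ℕ} {x : (Σ j, α j) → ℕ} :
    x ∈ multidegreeFiber h ↔ multidegree x = h := by
  simp only [multidegreeFiber, Finset.mem_map_equiv, Equiv.symm_symm, Equiv.piCurry_apply,
    Fintype.mem_piFinset, Finset.mem_piAntidiag, Finset.mem_univ, implies_true, and_true,
    funext_iff]
  rfl

theorem card_multidegreeFiber (h : ι → ℕ) :
    (multidegreeFiber h : Finset ((Σ j, α j) → ℕ)).card =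
      ∏ j, (Fintype.card (α j)).multichoose (h j) := by
  simp only [multidegreeFiber, Finset.card_map, Fintype.card_piFinset, card_piAntidiag_univ]

theorem card_filter_ge_multidegreeFiber {u : (Σ j, α j) → ℕ} [DecidablePred (u ≤ ·)]
    {h : ι → ℕ} (hu : multidegree u ≤ h) :
    ((multidegreeFiber h).filter (u ≤ ·)).card =
      ∏ j, (Fintype.card (α j)).multichoose (h j - multidegree u j) := by
  have htranslate : (multidegreeFiber h).filter (u ≤ ·) =
      (multidegreeFiber (h - multidegree u)).map (addLeftEmbedding u) := by
    ext x
    simp only [Finset.mem_filter, Finset.mem_map, mem_multidegreeFiber, addLeftEmbedding_apply]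
    constructor
    · rintro ⟨rfl, hux⟩
      obtain ⟨d, rfl⟩ := exists_add_of_le hux
      exact ⟨d, by rw [map_add, add_tsub_cancel_left], rfl⟩
    · rintro ⟨d, hd, rfl⟩
      exact ⟨by rw [map_add, hd, add_tsub_cancel_of_le hu], le_self_add⟩
  rw [htranslate, Finset.card_map, card_multidegreeFiber]
  rfl

/-- The polynomial in `h` that counts the exponent vectors `x ≥ u` of multidegree `h`; the count
is correct for `h ≥ multidegree u`. -/
noncomputable def geCountPolynomial (u : (Σ j, α j) → ℕ) : MvPolynomial ι ℚ :=
  ∏ j, (Polynomial.preHilbertPoly ℚ (Fintype.card (α j) - 1) (multidegree u j)).toMvPolynomial j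

theorem eval_geCountPolynomial [∀ j, Nonempty (α j)] {u : (Σ j, α j) → ℕ}
    [DecidablePred (u ≤ ·)] {h : ι → ℕ} (hu : multidegree u ≤ h) :
    MvPolynomial.eval (fun j => (h j : ℚ)) (geCountPolynomial u) =
      ((multidegreeFiber h).filter (u ≤ ·)).card := by
  rw [geCountPolynomial, map_prod, card_filter_ge_multidegreeFiber hu, Nat.cast_prod]
  refine Finset.prod_congr rfl fun j _ => ?_
  rw [MvPolynomial.eval_toMvPolynomial, eval_preHilbertPoly_eq_multichoose Fintype.card_pos (hu j)]

theorem exists_mvPolynomial_eval_eq_card_filter_of_isLowerSet [∀ j, Nonempty (α j)]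
    {L : Set ((Σ j, α j) → ℕ)} [DecidablePred (· ∈ L)] (hL : IsLowerSet L) :
    ∃ p : MvPolynomial ι ℚ, ∃ N : ℕ, ∀ h : ι → ℕ, (∀ j, N ≤ h j) →
      (((multidegreeFiber h).filter (· ∈ L)).card : ℚ) =
        MvPolynomial.eval (fun j => (h j : ℚ)) p := by
  classical
  obtain ⟨M, hM⟩ := exists_finset_mem_iff_forall_not_le_of_isLowerSet hL
  refine ⟨∑ t ∈ M.powerset, MvPolynomial.C ((-1) ^ t.card) * geCountPolynomial (t.sup id),
    Finset.univ.sup (multidegree (M.sup id)), fun h hh => ?_⟩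
  have hle : ∀ t ∈ M.powerset, multidegree (t.sup id) ≤ h := fun t ht j =>
    (multidegree_mono (Finset.sup_mono (Finset.mem_powerset.1 ht)) j).trans
      ((Finset.le_sup (Finset.mem_univ j)).trans (hh j))
  have hsieve := card_filter_forall_not_eq_sum_powerset (multidegreeFiber h) M (· ≤ ·)
  simp only [← hM] at hsieve
  rw [← Int.cast_natCast, hsieve, Int.cast_sum, map_sum]
  refine Finset.sum_congr rfl fun t ht => ?_
  rw [map_mul, MvPolynomial.eval_C, eval_geCountPolynomial (hle t ht)]
  simp

theorem exists_mvPolynomial_eval_eq_card_image_multidegreeFiber {S : Type*} [AddZeroClass S]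
    [DecidableEq S] [∀ j, Nonempty (α j)] (φ : ((Σ j, α j) → ℕ) →+ S) :
    ∃ p : MvPolynomial ι ℚ, ∃ N : ℕ, ∀ h : ι → ℕ, (∀ j, N ≤ h j) →
      (((multidegreeFiber h).image φ).card : ℚ) =
        MvPolynomial.eval (fun j => (h j : ℚ)) p := by
  classical
  obtain ⟨L, hL, hbij⟩ := exists_isLowerSet_bijOn_range (multidegree.prod φ)
  obtain ⟨p, N, hp⟩ := exists_mvPolynomial_eval_eq_card_filter_of_isLowerSet hL
  refine ⟨p, N, fun h hh => ?_⟩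
  have himage : (multidegreeFiber h).image φ = ((multidegreeFiber h).filter (· ∈ L)).image φ := by
    refine (Finset.image_subset_iff.2 fun y hy => ?_).antisymm
      (Finset.image_subset_image (Finset.filter_subset _ _))
    obtain ⟨x, hxL, hxy⟩ := hbij.surjOn (Set.mem_range_self y)
    obtain ⟨hdeg, hφ⟩ := Prod.ext_iff.1 hxy
    rw [mem_multidegreeFiber] at hy
    exact Finset.mem_image.2
      ⟨x, Finset.mem_filter.2 ⟨mem_multidegreeFiber.2 (hdeg.trans hy), hxL⟩, hφ⟩
  have hinj : Set.InjOn φ ((multidegreeFiber h).filter (· ∈ L) : Finset ((Σ j, α j) → ℕ)) := by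
    intro x hx y hy hxy
    obtain ⟨hxh, hxL⟩ := Finset.mem_filter.1 hx
    obtain ⟨hyh, hyL⟩ := Finset.mem_filter.1 hy
    rw [mem_multidegreeFiber] at hxh hyh
    exact hbij.injOn hxL hyL (Prod.ext (hxh.trans hyh.symm) hxy)
  rw [himage, Finset.card_image_of_injOn hinj, hp h hh]

end Multidegree

section Sumset

variable {S : Type*} [AddCommMonoid S] [DecidableEq S]

theorem mem_nsmul_iff_exists_multiplicity {A : Finset S} {n : ℕ} {s : S} :
    s ∈ n • A ↔ ∃ y : A → ℕ, ∑ a, y a = n ∧ ∑ a, y a • (a : S) = s := by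
  constructor
  · intro hs
    obtain ⟨f, rfl⟩ := Finset.mem_nsmul.1 hs
    refine ⟨fun a => (Finset.univ.filter (f · = a)).card, ?_, ?_⟩
    · rw [← Finset.card_eq_sum_card_fiberwise fun _ _ => Finset.mem_univ _, Finset.card_fin]
    · simp_rw [← Finset.sum_const, List.sum_ofFn]
      exact Finset.sum_fiberwise' _ f _
  · rintro ⟨y, rfl, rfl⟩
    rw [← Finset.sum_nsmul_assoc, ← Finset.mem_coe, Finset.coe_sum]
    exact Set.finsetSum_mem_finsetSum _ _ _ fun a _ =>
      Finset.mem_coe.2 (Finset.nsmul_mem_nsmul a.2)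

theorem sum_nsmul_eq_image_multidegreeFiber {ι : Type*} [Fintype ι] [DecidableEq ι]
    (A : ι → Finset S) (h : ι → ℕ) :
    ∑ j, h j • A j = (multidegreeFiber h).image
      (Fintype.linearCombination ℕ fun i : Σ j, A j => (i.2 : S)) := by
  ext s
  rw [← Finset.mem_coe, Finset.coe_sum, Set.mem_fintype_sum]
  simp only [Finset.mem_coe, mem_nsmul_iff_exists_multiplicity, Finset.mem_image,
    mem_multidegreeFiber, Fintype.linearCombination_apply, Fintype.sum_sigma]
  constructor
  · rintro ⟨g, hg, rfl⟩
    choose y hdeg hsum using hg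
    exact ⟨Sigma.uncurry y, funext hdeg, Finset.sum_congr rfl fun j _ => hsum j⟩
  · rintro ⟨x, rfl, rfl⟩
    exact ⟨fun j => ∑ a, x ⟨j, a⟩ • (a : S), fun j => ⟨fun a => x ⟨j, a⟩, rfl, rfl⟩, rfl⟩

end Sumset

theorem stmt_12 {S : Type*} [AddCommMonoid S] [DecidableEq S]
    (r : ℕ) (A : Fin r → Finset S) (hA : ∀ j, (A j).Nonempty) :
    ∃ p : MvPolynomial (Fin r) ℚ, ∃ N : ℕ, ∀ h : Fin r → ℕ,
      (∀ j, N ≤ h j) →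
      (((∑ j, h j • A j).card : ℚ)) = MvPolynomial.eval (fun j => (h j : ℚ)) p := by
  have : ∀ j, Nonempty (A j) := fun j => (hA j).to_subtype
  simp only [sum_nsmul_eq_image_multidegreeFiber]
  exact exists_mvPolynomial_eval_eq_card_image_multidegreeFiber
    (Fintype.linearCombination ℕ fun i : Σ j, A j => (i.2 : S)).toAddMonoidHom
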